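/- Every ERR:LD set of the infinite hexagonal grid HEX has density at least 3/4, and there exists an ERR:LD set of HEX whose density equals 3/4; thus the minimum ERR:LD density of HEX is 3/4. -/

import Mathlib

open scoped symmDiff

variable {V : Type*}

/-- The closed neighborhood `N[v]` of a vertex. -/
def closedNbhd (G : SimpleGraph V) (v : V) : Set V := insert v (G.neighborSet v)

/-- `S` is an error-correcting locating-dominating (ERR:LD) set: conditions (i)-(iv). -/
def IsErrLD (G : SimpleGraph V) (S : Set V) : Prop :=
  (∀ v : V, 3 ≤ (closedNbhd G v ∩ S).encard) ∧
  (∀ v ∈ S, ∀ u ∈ S, u ≠ v →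
    1 ≤ ((((G.neighborSet v ∩ S) ∆ (G.neighborSet u ∩ S)) \ {v, u}).encard)) ∧
  (∀ v ∉ S, ∀ u ∈ S,
    2 ≤ ((((G.neighborSet v ∩ S) ∆ (G.neighborSet u ∩ S)) \ {u}).encard)) ∧
  (∀ v ∉ S, ∀ u ∉ S, u ≠ v →
    3 ≤ (((G.neighborSet v ∩ S) ∆ (G.neighborSet u ∩ S)).encard))

/-- The ball of radius `r` around `v₀` in graph distance. -/
def ballSet (G : SimpleGraph V) (v₀ : V) (r : ℕ) : Set V := {u | G.dist v₀ u ≤ r}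

/-- The (upper) density of a vertex set `S`, relative to base vertex `v₀`. -/
noncomputable def density (G : SimpleGraph V) (S : Set V) (v₀ : V) : ℝ :=
  Filter.limsup (fun r : ℕ =>
    ((S ∩ ballSet G v₀ r).ncard : ℝ) / ((ballSet G v₀ r).ncard : ℝ)) Filter.atTop

/-- The infinite hexagonal grid (brick-wall representation on `ℤ × ℤ`). -/
def hexGrid : SimpleGraph (ℤ × ℤ) :=
  SimpleGraph.fromRel (fun p q =>
    (p.2 = q.2 ∧ (p.1 = q.1 + 1 ∨ q.1 = p.1 + 1)) ∨
    (p.1 = q.1 ∧ q.2 = p.2 + 1 ∧ Even (p.1 + p.2)))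

/-! Summing `|N[v] ∩ S|` over a ball counts every vertex of `S` away from the boundary `d + 1` times
in a `d`-regular graph, so if the boundaries of the balls are negligible and every closed
neighborhood meets `S` in at least (at most) `k` vertices, then `S` has density at least (at most)
`k / (d + 1)`. With `d = k = 3`, condition (i) alone forces density at least `3 / 4`. When there
are no triangles or 4-cycles, `N(v)` loses at most one vertex on removing `N[u]`, so condition (i)
implies conditions (ii)-(iv), and it suffices to find a set meeting every closed neighborhood in
exactly three vertices. In the hexagonal grid the complement of a perfect code is one.

To control the balls of the grid, embed it into `ℤ³` as the points with `x + y + z ∈ {0, 1}`. The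
graph distance becomes the `ℓ¹` distance, so spheres grow linearly and balls quadratically. -/

open Filter Asymptotics Topology

section ErrLD

variable {G : SimpleGraph V} {S : Set V} {u v : V}

lemma mem_closedNbhd_comm : u ∈ closedNbhd G v ↔ v ∈ closedNbhd G u := by
  simp only [closedNbhd, Set.mem_insert_iff, SimpleGraph.mem_neighborSet, G.adj_comm v u,
    eq_comm (a := u)]

/-- `G` has no cycles of length three or four. The case `x = u` or `y = u` of two common elements
`x, y` of `N(v)` and `N[u]` rules out triangles, the case `x, y ∈ N(u)` rules out 4-cycles. -/
def GirthAtLeastFive (G : SimpleGraph V) : Prop :=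
  Pairwise fun u v => (G.neighborSet v ∩ closedNbhd G u).Subsingleton

lemma encard_closedNbhd_inter_le (v : V) :
    (closedNbhd G v ∩ S).encard ≤ (G.neighborSet v ∩ S).encard + 1 := by
  have hsub : closedNbhd G v ∩ S ⊆ insert v (G.neighborSet v ∩ S) := by
    rintro x ⟨rfl | hx, hxS⟩
    · exact Set.mem_insert x _
    · exact Set.mem_insert_of_mem _ ⟨hx, hxS⟩
  exact (Set.encard_le_encard hsub).trans (Set.encard_insert_le _ _)

lemma closedNbhd_inter_of_notMem (hv : v ∉ S) : closedNbhd G v ∩ S = G.neighborSet v ∩ S :=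
  Set.insert_inter_of_notMem hv

lemma GirthAtLeastFive.le_encard_sdiff_closedNbhd (hG : GirthAtLeastFive G) {n : ℕ∞}
    (huv : u ≠ v) (hn : n + 1 ≤ (G.neighborSet v ∩ S).encard) :
    n ≤ ((G.neighborSet v ∩ S) \ closedNbhd G u).encard := by
  have hcommon : (G.neighborSet v ∩ S ∩ closedNbhd G u).encard ≤ 1 :=
    Set.encard_le_one_iff_subsingleton.2 <|
      (hG huv).anti fun _ hx => ⟨hx.1.1, hx.2⟩
  refine (ENat.add_le_add_iff_right ENat.one_ne_top).1 (hn.trans ?_)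
  rw [← Set.encard_sdiff_add_encard_inter (G.neighborSet v ∩ S) (closedNbhd G u)]
  gcongr

lemma sdiff_closedNbhd_subset_symmDiff_sdiff (u v : V) :
    (G.neighborSet v ∩ S) \ closedNbhd G u ⊆
      ((G.neighborSet v ∩ S) ∆ (G.neighborSet u ∩ S)) \ {v, u} := by
  rintro x ⟨⟨hvx, hxS⟩, hux⟩
  refine ⟨Or.inl ⟨⟨hvx, hxS⟩, fun h => hux (Set.mem_insert_of_mem _ h.1)⟩, ?_⟩
  rintro (rfl | rfl)
  · exact G.loopless.irrefl _ hvx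
  · exact hux (Set.mem_insert _ _)

theorem GirthAtLeastFive.isErrLD_iff (hG : GirthAtLeastFive G) :
    IsErrLD G S ↔ ∀ v, 3 ≤ (closedNbhd G v ∩ S).encard := by
  refine ⟨fun h => h.1, fun h => ?_⟩
  have htwo : ∀ v, 2 ≤ (G.neighborSet v ∩ S).encard := fun v =>
    (ENat.add_le_add_iff_right ENat.one_ne_top).1 <|
      (h v).trans (encard_closedNbhd_inter_le v)
  have hthree : ∀ v ∉ S, 3 ≤ (G.neighborSet v ∩ S).encard := fun v hv =>
    closedNbhd_inter_of_notMem (G := G) hv ▸ h v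
  have hsub := sdiff_closedNbhd_subset_symmDiff_sdiff (G := G) (S := S)
  refine ⟨h, fun v _ u _ huv => ?_, fun v hv u hu => ?_, fun v hv u hu huv => ?_⟩
  · exact (hG.le_encard_sdiff_closedNbhd huv (htwo v)).trans (Set.encard_le_encard (hsub u v))
  · have huv : u ≠ v := fun e => hv (e ▸ hu)
    refine (hG.le_encard_sdiff_closedNbhd huv (hthree v hv)).trans (Set.encard_le_encard ?_)
    exact (hsub u v).trans (Set.sdiff_subset_sdiff_right (Set.subset_insert v {u}))
  · let A := (G.neighborSet v ∩ S) \ closedNbhd G u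
    let B := (G.neighborSet u ∩ S) \ closedNbhd G v
    have hA : 2 ≤ A.encard := hG.le_encard_sdiff_closedNbhd huv (hthree v hv)
    have hB : 2 ≤ B.encard := hG.le_encard_sdiff_closedNbhd huv.symm (hthree u hu)
    have hdisj : Disjoint A B :=
      Set.disjoint_left.2 fun x hxA hxB => hxB.2 (Set.mem_insert_of_mem _ hxA.1.1)
    have hunion : A ∪ B ⊆ (G.neighborSet v ∩ S) ∆ (G.neighborSet u ∩ S) := by
      refine Set.union_subset ((hsub u v).trans Set.sdiff_subset) ?_
      exact symmDiff_comm (G.neighborSet u ∩ S) _ ▸ (hsub v u).trans Set.sdiff_subset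
    calc (3 : ℕ∞) ≤ 2 + 2 := by norm_num
      _ ≤ A.encard + B.encard := add_le_add hA hB
      _ = (A ∪ B).encard := (Set.encard_union_eq hdisj).symm
      _ ≤ ((G.neighborSet v ∩ S) ∆ (G.neighborSet u ∩ S)).encard := Set.encard_le_encard hunion

end ErrLD

section Density

variable {G : SimpleGraph V} {S : Set V} {v₀ v : V} {d k r : ℕ}

lemma mem_ballSet_self : v₀ ∈ ballSet G v₀ r := by
  simp [ballSet]

lemma closedNbhd_subset_ballSet_succ (hconn : G.Connected) (hv : v ∈ ballSet G v₀ r) :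
    closedNbhd G v ⊆ ballSet G v₀ (r + 1) := by
  have hv : G.dist v₀ v ≤ r := hv
  intro w hw
  rcases hw with rfl | hvw
  · exact hv.trans r.le_succ
  · calc G.dist v₀ w ≤ G.dist v₀ v + G.dist v w := hconn.dist_triangle
      _ ≤ r + 1 := by gcongr; exact (SimpleGraph.dist_eq_one_iff_adj.2 hvw).le

lemma ballSet_succ_subset (hconn : G.Connected) :
    ballSet G v₀ (r + 1) ⊆ ⋃ v ∈ ballSet G v₀ r, closedNbhd G v := by
  intro w hw
  have hw : G.dist v₀ w ≤ r + 1 := hw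
  rw [G.dist_comm] at hw
  simp only [Set.mem_iUnion]
  obtain ⟨p, hp⟩ := hconn.exists_walk_length_eq_dist w v₀
  cases p with
  | nil => exact ⟨v₀, mem_ballSet_self, Set.mem_insert _ _⟩
  | @cons _ u _ hwu q =>
    have hu : G.dist v₀ u ≤ r := by
      have hq := SimpleGraph.dist_le q
      rw [SimpleGraph.Walk.length_cons] at hp
      rw [G.dist_comm]
      omega
    exact ⟨u, hu, Set.mem_insert_of_mem _ hwu.symm⟩

lemma closedNbhd_finite [G.LocallyFinite] (v : V) : (closedNbhd G v).Finite :=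
  (Set.toFinite (G.neighborSet v)).insert v

lemma ballSet_finite [G.LocallyFinite] (hconn : G.Connected) (v₀ : V) (r : ℕ) :
    (ballSet G v₀ r).Finite := by
  induction r with
  | zero =>
    refine (Set.finite_singleton v₀).subset fun v hv => ?_
    exact (hconn.dist_eq_zero_iff.1 (Nat.le_zero.1 hv)).symm
  | succ r ih =>
    exact (ih.biUnion fun v _ => closedNbhd_finite v).subset (ballSet_succ_subset hconn)

lemma ncard_ballSet_pos [G.LocallyFinite] (hconn : G.Connected) (v₀ : V) (r : ℕ) :
    0 < (ballSet G v₀ r).ncard :=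
  (Set.ncard_pos (ballSet_finite hconn v₀ r)).2 ⟨v₀, mem_ballSet_self⟩

lemma encard_closedNbhd [G.LocallyFinite] (hreg : G.IsRegularOfDegree d) (v : V) :
    (closedNbhd G v).encard = d + 1 := by
  rw [closedNbhd, Set.encard_insert_of_notMem (G.notMem_neighborSet_self),
    ← hreg v, ← G.coe_neighborFinset, Set.encard_coe_eq_coe_finsetCard,
    G.card_neighborFinset_eq_degree]

lemma ncard_mul_le_ncard_mul {α β : Type*} {s : Set α} {t : Set β} {m n : ℕ} (R : α → β → Prop)
    (hs : s.Finite) (ht : t.Finite) (hm : ∀ a ∈ s, m ≤ {b ∈ t | R a b}.encard)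
    (hn : ∀ b ∈ t, {a ∈ s | R a b}.encard ≤ n) : s.ncard * m ≤ t.ncard * n := by
  classical
  lift s to Finset α using hs
  lift t to Finset β using ht
  simp only [Set.ncard_coe_finset]
  refine Finset.card_mul_le_card_mul R (fun a ha => ?_) fun b hb => ?_
  · rw [← Nat.cast_le (α := ℕ∞), ← Set.encard_coe_eq_coe_finsetCard, Finset.coe_bipartiteAbove]
    exact hm a ha
  · rw [← Nat.cast_le (α := ℕ∞), ← Set.encard_coe_eq_coe_finsetCard, Finset.coe_bipartiteBelow]
    exact hn b hb

lemma ncard_ballSet_mul_le [G.LocallyFinite] (hconn : G.Connected) (hreg : G.IsRegularOfDegree d)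
    (hS : ∀ v, k ≤ (closedNbhd G v ∩ S).encard) (v₀ : V) (r : ℕ) :
    (ballSet G v₀ r).ncard * k ≤ (S ∩ ballSet G v₀ (r + 1)).ncard * (d + 1) := by
  refine ncard_mul_le_ncard_mul (fun v w => w ∈ closedNbhd G v) (ballSet_finite hconn v₀ r)
    ((ballSet_finite hconn v₀ (r + 1)).inter_of_right S) (fun v hv => ?_) fun w _ => ?_
  · refine (hS v).trans (Set.encard_le_encard fun w hw => ⟨⟨hw.2, ?_⟩, hw.1⟩)
    exact closedNbhd_subset_ballSet_succ hconn hv hw.1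
  · rw [Nat.cast_succ, ← encard_closedNbhd hreg w]
    exact Set.encard_le_encard fun v hv => mem_closedNbhd_comm.1 hv.2

lemma ncard_inter_ballSet_mul_le [G.LocallyFinite] (hconn : G.Connected)
    (hreg : G.IsRegularOfDegree d) (hS : ∀ v, (closedNbhd G v ∩ S).encard ≤ k) (v₀ : V) (r : ℕ) :
    (S ∩ ballSet G v₀ r).ncard * (d + 1) ≤ (ballSet G v₀ (r + 1)).ncard * k := by
  refine ncard_mul_le_ncard_mul (fun w v => v ∈ closedNbhd G w)
    ((ballSet_finite hconn v₀ r).inter_of_right S) (ballSet_finite hconn v₀ (r + 1))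
    (fun w hw => ?_) fun v _ => ?_
  · rw [Nat.cast_succ, ← encard_closedNbhd hreg w]
    exact Set.encard_le_encard fun v hv => ⟨closedNbhd_subset_ballSet_succ hconn hw.2 hv, hv⟩
  · refine le_trans (Set.encard_le_encard fun w hw => ?_) (hS v)
    exact ⟨mem_closedNbhd_comm.1 hw.2, hw.1.1⟩

/-- The spheres around `v₀` are asymptotically negligible compared with the balls, that is, the
balls around `v₀` form a Følner sequence. -/
def HasFolnerBalls (G : SimpleGraph V) (v₀ : V) : Prop :=
  (fun r : ℕ => ((ballSet G v₀ (r + 1)).ncard : ℝ)) ~[atTop] fun r => ((ballSet G v₀ r).ncard : ℝ)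

lemma HasFolnerBalls.tendsto_succ_div [G.LocallyFinite] (hconn : G.Connected)
    (hball : HasFolnerBalls G v₀) :
    Tendsto (fun r : ℕ => ((ballSet G v₀ (r + 1)).ncard : ℝ) / (ballSet G v₀ r).ncard)
      atTop (𝓝 1) :=
  (isEquivalent_iff_tendsto_one <| Eventually.of_forall fun r =>
    Nat.cast_ne_zero.2 (ncard_ballSet_pos hconn v₀ r).ne').1 hball

lemma HasFolnerBalls.tendsto_div_succ [G.LocallyFinite] (hconn : G.Connected)
    (hball : HasFolnerBalls G v₀) :
    Tendsto (fun r : ℕ => ((ballSet G v₀ r).ncard : ℝ) / (ballSet G v₀ (r + 1)).ncard)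
      atTop (𝓝 1) := by
  simpa only [inv_div, inv_one] using (hball.tendsto_succ_div hconn).inv₀ one_ne_zero

lemma ncard_inter_ballSet_div_le_one [G.LocallyFinite] (hconn : G.Connected) (S : Set V) (v₀ : V)
    (r : ℕ) : ((S ∩ ballSet G v₀ r).ncard : ℝ) / (ballSet G v₀ r).ncard ≤ 1 :=
  div_le_one_of_le₀ (Nat.cast_le.2 <|
    Set.ncard_le_ncard Set.inter_subset_right (ballSet_finite hconn v₀ r)) (Nat.cast_nonneg _)

theorem le_density_of_le_encard_closedNbhd_inter [G.LocallyFinite] (hconn : G.Connected)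
    (hreg : G.IsRegularOfDegree d) (hball : HasFolnerBalls G v₀)
    (hS : ∀ v, k ≤ (closedNbhd G v ∩ S).encard) :
    (k : ℝ) / (d + 1) ≤ density G S v₀ := by
  have hlim := (hball.tendsto_div_succ hconn).const_mul ((k : ℝ) / (d + 1))
  rw [mul_one] at hlim
  rw [density, ← limsup_nat_add _ 1, ← hlim.limsup_eq]
  refine limsup_le_limsup (Eventually.of_forall fun r => ?_) hlim.isCoboundedUnder_le
    (isBoundedUnder_of ⟨1, fun r => ncard_inter_ballSet_div_le_one hconn S v₀ (r + 1)⟩)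
  have hcount : ((ballSet G v₀ r).ncard : ℝ) * k ≤ (S ∩ ballSet G v₀ (r + 1)).ncard * (d + 1) :=
    mod_cast ncard_ballSet_mul_le hconn hreg hS v₀ r
  calc (k : ℝ) / (d + 1) * ((ballSet G v₀ r).ncard / (ballSet G v₀ (r + 1)).ncard)
      = (ballSet G v₀ r).ncard * k / (d + 1) / (ballSet G v₀ (r + 1)).ncard := by ring
    _ ≤ (S ∩ ballSet G v₀ (r + 1)).ncard / (ballSet G v₀ (r + 1)).ncard := by
      gcongr
      exact (div_le_iff₀ (by positivity)).2 hcount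

theorem density_le_of_encard_closedNbhd_inter_le [G.LocallyFinite] (hconn : G.Connected)
    (hreg : G.IsRegularOfDegree d) (hball : HasFolnerBalls G v₀)
    (hS : ∀ v, (closedNbhd G v ∩ S).encard ≤ k) :
    density G S v₀ ≤ (k : ℝ) / (d + 1) := by
  have hlim := (hball.tendsto_succ_div hconn).const_mul ((k : ℝ) / (d + 1))
  rw [mul_one] at hlim
  rw [density, ← hlim.limsup_eq]
  refine limsup_le_limsup (Eventually.of_forall fun r => ?_)
    (isBoundedUnder_of ⟨0, fun r => by positivity⟩ : IsBoundedUnder (· ≥ ·) _ _).isCoboundedUnder_le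
    hlim.isBoundedUnder_le
  have hcount : ((S ∩ ballSet G v₀ r).ncard : ℝ) * (d + 1) ≤ (ballSet G v₀ (r + 1)).ncard * k :=
    mod_cast ncard_inter_ballSet_mul_le hconn hreg hS v₀ r
  calc ((S ∩ ballSet G v₀ r).ncard : ℝ) / (ballSet G v₀ r).ncard
      ≤ (ballSet G v₀ (r + 1)).ncard * k / (d + 1) / (ballSet G v₀ r).ncard := by
        gcongr
        exact (le_div_iff₀ (by positivity)).2 hcount
    _ = (k : ℝ) / (d + 1) * ((ballSet G v₀ (r + 1)).ncard / (ballSet G v₀ r).ncard) := by ring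

theorem density_eq_of_encard_closedNbhd_inter_eq [G.LocallyFinite] (hconn : G.Connected)
    (hreg : G.IsRegularOfDegree d) (hball : HasFolnerBalls G v₀)
    (hS : ∀ v, (closedNbhd G v ∩ S).encard = k) :
    density G S v₀ = (k : ℝ) / (d + 1) :=
  le_antisymm
    (density_le_of_encard_closedNbhd_inter_le hconn hreg hball fun v => (hS v).le)
    (le_density_of_le_encard_closedNbhd_inter hconn hreg hball fun v => (hS v).ge)

end Density

section DistanceFormula

variable {G : SimpleGraph V} {v₀ : V} {f : V → ℕ}

lemma exists_walk_length_le_of_descent (hdesc : ∀ v ≠ v₀, ∃ w, G.Adj v w ∧ f w < f v) (v : V) :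
    ∃ p : G.Walk v v₀, p.length ≤ f v := by
  induction hn : f v using Nat.strong_induction_on generalizing v with
  | _ n ih =>
    by_cases hv : v = v₀
    · subst hv
      exact ⟨.nil, Nat.zero_le _⟩
    · obtain ⟨w, hvw, hlt⟩ := hdesc v hv
      obtain ⟨p, hp⟩ := ih (f w) (hn ▸ hlt) w rfl
      exact ⟨.cons hvw p, by rw [SimpleGraph.Walk.length_cons]; omega⟩

lemma connected_of_descent (hdesc : ∀ v ≠ v₀, ∃ w, G.Adj v w ∧ f w < f v) : G.Connected :=
  have : Nonempty V := ⟨v₀⟩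
  ⟨fun u v => (exists_walk_length_le_of_descent hdesc u).choose.reachable.trans
    (exists_walk_length_le_of_descent hdesc v).choose.reachable.symm⟩

lemma le_add_length_of_lipschitz (hlip : ∀ u v, G.Adj u v → f u ≤ f v + 1) {u v : V}
    (p : G.Walk u v) : f u ≤ f v + p.length := by
  induction p with
  | nil => exact le_rfl
  | cons huw p ih =>
    have := hlip _ _ huw
    rw [SimpleGraph.Walk.length_cons]
    omega

lemma dist_eq_of_lipschitz_of_descent (hf : f v₀ = 0) (hlip : ∀ u v, G.Adj u v → f u ≤ f v + 1)
    (hdesc : ∀ v ≠ v₀, ∃ w, G.Adj v w ∧ f w < f v) (v : V) : G.dist v₀ v = f v := by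
  rw [G.dist_comm]
  obtain ⟨p, hp⟩ := exists_walk_length_le_of_descent hdesc v
  obtain ⟨q, hq⟩ := (connected_of_descent hdesc).exists_walk_length_eq_dist v v₀
  refine le_antisymm ((SimpleGraph.dist_le p).trans hp) ?_
  simpa only [hf, hq, zero_add] using le_add_length_of_lipschitz hlip q

end DistanceFormula

section HexGrid

/-- The open neighborhood of `v` in the hexagonal grid. The third neighbor lies above `v` if
`v.1 + v.2` is even and below `v` if it is odd. -/
def hexNeighbors (v : ℤ × ℤ) : Finset (ℤ × ℤ) :=
  {(v.1 + 1, v.2), (v.1 - 1, v.2), (v.1, v.2 + 1 - 2 * ((v.1 + v.2) % 2))}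

lemma mem_hexNeighbors {v w : ℤ × ℤ} : w ∈ hexNeighbors v ↔ w = (v.1 + 1, v.2) ∨
    w = (v.1 - 1, v.2) ∨ w = (v.1, v.2 + 1 - 2 * ((v.1 + v.2) % 2)) := by
  simp only [hexNeighbors, Finset.mem_insert, Finset.mem_singleton]

lemma hexGrid_adj_iff {v w : ℤ × ℤ} : hexGrid.Adj v w ↔ w ∈ hexNeighbors v := by
  simp only [hexGrid, SimpleGraph.fromRel_adj, mem_hexNeighbors, ne_eq, Prod.ext_iff,
    Int.even_iff]
  omega

instance : hexGrid.LocallyFinite := fun v =>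
  Fintype.ofFinset (hexNeighbors v) fun _ => hexGrid_adj_iff.symm

lemma hexGrid_isRegularOfDegree : hexGrid.IsRegularOfDegree 3 := by
  intro v
  have hdegree : hexGrid.degree v = (hexNeighbors v).card := by
    rw [← SimpleGraph.card_neighborSet_eq_degree]
    exact Fintype.card_ofFinset (hexNeighbors v) fun _ => hexGrid_adj_iff.symm
  rw [hdegree, Finset.card_eq_three]
  refine ⟨_, _, _, ?_, ?_, ?_, rfl⟩ <;> simp only [ne_eq, Prod.mk.injEq] <;> omega

lemma hexGrid_girthAtLeastFive : GirthAtLeastFive hexGrid := by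
  rintro ⟨a, b⟩ ⟨c, d⟩ hne ⟨x₁, x₂⟩ hx ⟨y₁, y₂⟩ hy
  simp only [closedNbhd, Set.mem_inter_iff, Set.mem_insert_iff, SimpleGraph.mem_neighborSet,
    hexGrid_adj_iff, mem_hexNeighbors, Prod.mk.injEq, ne_eq] at *
  omega

/-- The `ℓ¹` norm of the image of `v` under the embedding of the grid into `ℤ³` as
`{(x, y, z) | x + y + z ∈ {0, 1}}`, which sends `(0, 0)` to `0` and in which adjacent points differ
by one in a single coordinate. Here `x + y + z` is the parity of `v.1 + v.2`, while `x - y = v.1`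
and `z = v.2`, and the divisions are exact. It is the distance from `(0, 0)`. -/
def hexNorm (v : ℤ × ℤ) : ℕ :=
  (((v.1 + v.2) % 2 + v.1 - v.2) / 2).natAbs + (((v.1 + v.2) % 2 - v.1 - v.2) / 2).natAbs +
    v.2.natAbs

lemma hexNorm_le_of_adj (v w : ℤ × ℤ) (h : hexGrid.Adj v w) : hexNorm v ≤ hexNorm w + 1 := by
  obtain ⟨a, b⟩ := v
  obtain ⟨c, d⟩ := w
  simp only [hexGrid_adj_iff, mem_hexNeighbors, Prod.mk.injEq] at h
  simp only [hexNorm]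
  omega

lemma exists_adj_hexNorm_lt (v : ℤ × ℤ) (hv : v ≠ (0, 0)) :
    ∃ w, hexGrid.Adj v w ∧ hexNorm w < hexNorm v := by
  obtain ⟨a, b⟩ := v
  simp only [ne_eq, Prod.mk.injEq] at hv
  have hright : hexGrid.Adj (a, b) (a + 1, b) := by
    simp [hexGrid_adj_iff, mem_hexNeighbors]
  have hleft : hexGrid.Adj (a, b) (a - 1, b) := by
    simp [hexGrid_adj_iff, mem_hexNeighbors]
  have hvert : hexGrid.Adj (a, b) (a, b + 1 - 2 * ((a + b) % 2)) := by
    simp [hexGrid_adj_iff, mem_hexNeighbors]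
  rcases Int.emod_two_eq (a + b) with hpar | hpar
  -- The coordinates sum to `0` and do not all vanish, so a negative one can be increased.
  · have hneg : a - b < 0 ∨ -a - b < 0 ∨ b < 0 := by omega
    rcases hneg with hx | hy | hz
    · exact ⟨_, hright, by simp only [hexNorm]; omega⟩
    · exact ⟨_, hleft, by simp only [hexNorm]; omega⟩
    · exact ⟨_, hvert, by simp only [hexNorm]; omega⟩
  -- The coordinates sum to `1`, so a positive one can be decreased.
  · have hpos : 0 < 1 + a - b ∨ 0 < 1 - a - b ∨ 0 < b := by omega
    rcases hpos with hx | hy | hz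
    · exact ⟨_, hleft, by simp only [hexNorm]; omega⟩
    · exact ⟨_, hright, by simp only [hexNorm]; omega⟩
    · exact ⟨_, hvert, by simp only [hexNorm]; omega⟩

lemma hexGrid_connected : hexGrid.Connected :=
  connected_of_descent exists_adj_hexNorm_lt

lemma mem_ballSet_hexGrid {v : ℤ × ℤ} {r : ℕ} :
    v ∈ ballSet hexGrid (0, 0) r ↔ hexNorm v ≤ r := by
  have hdist : hexGrid.dist (0, 0) v = hexNorm v :=
    dist_eq_of_lipschitz_of_descent (f := hexNorm) rfl hexNorm_le_of_adj exists_adj_hexNorm_lt v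
  rw [← hdist]
  rfl

-- In the coordinates of `hexNorm`: if `x` and `y` have opposite signs, then `|x| + |y| = |v.1|`.
-- Otherwise `z = v.2` is the only positive or the only negative coordinate, and it is determined by
-- the `ℓ¹` norm `m` and the coordinate sum `m % 2`.
lemma setOf_hexNorm_eq_subset (m : ℕ) : {v | hexNorm v = m} ⊆
    ((({1, -1} ×ˢ Finset.Icc (-m : ℤ) m).image fun p => (p.1 * (m - |p.2|), p.2)) ∪
      Finset.Icc (-m : ℤ) m ×ˢ {((m : ℤ) + 1) / 2, -((m : ℤ) / 2)} : Finset (ℤ × ℤ)) := by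
  rintro ⟨a, b⟩ hm
  have hm : hexNorm (a, b) = m := hm
  simp only [hexNorm] at hm
  have hb : -(m : ℤ) ≤ b ∧ b ≤ m := by omega
  have ha : -(m : ℤ) ≤ a ∧ a ≤ m := by omega
  have hcases : a = m - b.natAbs ∨ a = -(m - b.natAbs) ∨ b = ((m : ℤ) + 1) / 2 ∨
      b = -((m : ℤ) / 2) := by omega
  simp only [Int.natCast_natAbs] at hcases
  simp only [Finset.coe_union, Set.mem_union, Finset.mem_coe, Finset.mem_image, Finset.mem_product,
    Finset.mem_insert, Finset.mem_singleton, Finset.mem_Icc]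
  rcases hcases with h | h | h
  · exact Or.inl ⟨(1, b), ⟨Or.inl rfl, hb⟩, by simp [h]⟩
  · exact Or.inl ⟨(-1, b), ⟨Or.inr rfl, hb⟩, by simp [h]⟩
  · exact Or.inr ⟨ha, h⟩

lemma ncard_setOf_hexNorm_eq_le (m : ℕ) : {v | hexNorm v = m}.ncard ≤ 4 * (2 * m + 1) := by
  have hIcc : (Finset.Icc (-m : ℤ) m).card = 2 * m + 1 := by
    rw [Int.card_Icc]
    omega
  refine (Set.ncard_le_ncard (setOf_hexNorm_eq_subset m) (Finset.finite_toSet _)).trans ?_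
  rw [Set.ncard_coe_finset]
  refine (Finset.card_union_le _ _).trans ?_
  rw [show 4 * (2 * m + 1) = 2 * (2 * m + 1) + (2 * m + 1) * 2 by ring]
  gcongr
  · refine Finset.card_image_le.trans ?_
    rw [Finset.card_product, hIcc]
    gcongr
    exact Finset.card_le_two
  · rw [Finset.card_product, hIcc]
    gcongr
    exact Finset.card_le_two

lemma ncard_ballSet_hexGrid_succ_le (r : ℕ) : (ballSet hexGrid (0, 0) (r + 1)).ncard ≤
    (ballSet hexGrid (0, 0) r).ncard + 4 * (2 * r + 3) := by
  have hunion : ballSet hexGrid (0, 0) (r + 1) =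
      ballSet hexGrid (0, 0) r ∪ {v | hexNorm v = r + 1} := by
    ext v
    rw [Set.mem_union, mem_ballSet_hexGrid, mem_ballSet_hexGrid]
    exact Nat.le_succ_iff
  calc (ballSet hexGrid (0, 0) (r + 1)).ncard
      ≤ (ballSet hexGrid (0, 0) r).ncard + {v | hexNorm v = r + 1}.ncard :=
        hunion ▸ Set.ncard_union_le _ _
    _ ≤ (ballSet hexGrid (0, 0) r).ncard + 4 * (2 * r + 3) := by
        gcongr
        exact ncard_setOf_hexNorm_eq_le (r + 1)

lemma sq_le_ncard_ballSet_hexGrid (r : ℕ) : r ^ 2 ≤ 4 * (ballSet hexGrid (0, 0) r).ncard := by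
  let I : Finset ℤ := Finset.Icc 0 ((r / 2 : ℕ) : ℤ)
  have hsub : ((I ×ˢ I : Finset (ℤ × ℤ)) : Set (ℤ × ℤ)) ⊆ ballSet hexGrid (0, 0) r := by
    rintro ⟨a, b⟩ hab
    simp only [I, Finset.mem_coe, Finset.mem_product, Finset.mem_Icc] at hab
    simp only [mem_ballSet_hexGrid, hexNorm]
    omega
  have hcard : (I ×ˢ I).card = (r / 2 + 1) ^ 2 := by
    rw [Finset.card_product, Int.card_Icc, sq]
    congr 1
  calc r ^ 2 ≤ (2 * (r / 2 + 1)) ^ 2 := by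
        gcongr
        omega
    _ = 4 * (I ×ˢ I).card := by rw [hcard]; ring
    _ ≤ 4 * (ballSet hexGrid (0, 0) r).ncard := by
        gcongr
        rw [← Set.ncard_coe_finset]
        exact Set.ncard_le_ncard hsub (ballSet_finite hexGrid_connected _ r)

lemma hexGrid_hasFolnerBalls : HasFolnerBalls hexGrid (0, 0) := by
  have hsphere : (fun r : ℕ => ((ballSet hexGrid (0, 0) (r + 1)).ncard : ℝ) -
      (ballSet hexGrid (0, 0) r).ncard) =O[atTop] fun r : ℕ => (r : ℝ) ^ 1 := by
    refine .of_bound 20 ((eventually_ge_atTop 1).mono fun r hr => ?_)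
    have hmono : ((ballSet hexGrid (0, 0) r).ncard : ℝ) ≤ (ballSet hexGrid (0, 0) (r + 1)).ncard :=
      Nat.cast_le.2 <| Set.ncard_le_ncard (fun v (hv : _ ≤ r) => hv.trans r.le_succ)
        (ballSet_finite hexGrid_connected _ _)
    have hstep : ((ballSet hexGrid (0, 0) (r + 1)).ncard : ℝ) ≤
        (ballSet hexGrid (0, 0) r).ncard + 4 * (2 * r + 3) :=
      mod_cast ncard_ballSet_hexGrid_succ_le r
    have hr : (1 : ℝ) ≤ r := mod_cast hr
    rw [Real.norm_of_nonneg (sub_nonneg.2 hmono), Real.norm_of_nonneg (by positivity)]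
    linarith
  have hball : (fun r : ℕ => (r : ℝ) ^ 2) =O[atTop]
      fun r => ((ballSet hexGrid (0, 0) r).ncard : ℝ) := by
    refine .of_bound 4 (Eventually.of_forall fun r => ?_)
    rw [Real.norm_of_nonneg (by positivity), Real.norm_of_nonneg (by positivity)]
    exact_mod_cast sq_le_ncard_ballSet_hexGrid r
  have hpow : (fun r : ℕ => (r : ℝ) ^ 1) =o[atTop] fun r : ℕ => (r : ℝ) ^ 2 :=
    (isLittleO_pow_pow_atTop_of_lt one_lt_two).comp_tendsto tendsto_natCast_atTop_atTop
  exact (hsphere.trans_isLittleO hpow).trans_isBigO hball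

/-- A labelling of the vertices of the grid that takes each of its four values exactly once on every
closed neighborhood, so that its fibers are perfect codes. -/
def hexLabel (v : ℤ × ℤ) : ZMod 4 := (v.1 : ZMod 4) - 2 * v.2

lemma closedNbhd_hexGrid (v : ℤ × ℤ) : closedNbhd hexGrid v =
    {v, (v.1 + 1, v.2), (v.1 - 1, v.2), (v.1, v.2 + 1 - 2 * ((v.1 + v.2) % 2))} := by
  ext w
  simp only [closedNbhd, Set.mem_insert_iff, SimpleGraph.mem_neighborSet, hexGrid_adj_iff,
    mem_hexNeighbors, Set.mem_singleton_iff]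

lemma hexLabel_vertical (v : ℤ × ℤ) :
    hexLabel (v.1, v.2 + 1 - 2 * ((v.1 + v.2) % 2)) = hexLabel v + 2 := by
  have h4 : (4 : ZMod 4) = 0 := rfl
  simp only [hexLabel]
  push_cast
  linear_combination (-1 + ((v.1 + v.2) % 2 : ℤ)) * h4

lemma bijOn_hexLabel_closedNbhd (v : ℤ × ℤ) :
    Set.BijOn hexLabel (closedNbhd hexGrid v) Set.univ := by
  have hsurj : Set.SurjOn hexLabel (closedNbhd hexGrid v) Set.univ := by
    have hright : hexLabel (v.1 + 1, v.2) = hexLabel v + 1 := by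
      simp only [hexLabel, Int.cast_add, Int.cast_one]
      ring
    have hleft : hexLabel (v.1 - 1, v.2) = hexLabel v - 1 := by
      simp only [hexLabel, Int.cast_sub, Int.cast_one]
      ring
    rw [closedNbhd_hexGrid, Set.SurjOn, Set.image_insert_eq, Set.image_insert_eq,
      Set.image_insert_eq, Set.image_singleton, hright, hleft, hexLabel_vertical]
    have hcover : ∀ c x : ZMod 4, x = c ∨ x = c + 1 ∨ x = c - 1 ∨ x = c + 2 := by decide
    exact fun x _ => hcover _ x
  have hinj : Set.InjOn hexLabel (closedNbhd hexGrid v) := by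
    refine Set.injOn_of_ncard_image_eq ?_ (closedNbhd_finite v)
    rw [Set.univ_subset_iff.1 hsurj, Set.ncard_univ, Nat.card_zmod, Set.ncard,
      encard_closedNbhd hexGrid_isRegularOfDegree v]
    rfl
  exact ⟨Set.mapsTo_univ _ _, hinj, hsurj⟩

lemma encard_closedNbhd_inter_hexLabel_ne_zero (v : ℤ × ℤ) :
    (closedNbhd hexGrid v ∩ {w | hexLabel w ≠ 0}).encard = 3 := by
  have hbij := bijOn_hexLabel_closedNbhd v
  have himage : hexLabel '' (closedNbhd hexGrid v ∩ {w | hexLabel w ≠ 0}) = {0}ᶜ := by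
    change hexLabel '' (closedNbhd hexGrid v ∩ hexLabel ⁻¹' {0}ᶜ) = {0}ᶜ
    rw [Set.image_inter_preimage, hbij.image_eq, Set.univ_inter]
  rw [← (hbij.injOn.mono Set.inter_subset_left).encard_image, himage,
    Set.encard_eq_coe_toFinset_card]
  rfl

end HexGrid

theorem errLD_density_hex_general {G : SimpleGraph V} [G.LocallyFinite] {v₀ : V} {S₀ : Set V}
    (hconn : G.Connected) (hreg : G.IsRegularOfDegree 3) (hgirth : GirthAtLeastFive G)
    (hball : HasFolnerBalls G v₀) (hS₀ : ∀ v, (closedNbhd G v ∩ S₀).encard = 3) :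
    (∀ S : Set V, IsErrLD G S → (3 : ℝ) / 4 ≤ density G S v₀) ∧
    (∃ S : Set V, IsErrLD G S ∧ density G S v₀ = (3 : ℝ) / 4) := by
  have hquot : (3 : ℝ) / 4 = (3 : ℕ) / ((3 : ℕ) + 1) := by norm_num
  rw [hquot]
  exact ⟨fun S hS => le_density_of_le_encard_closedNbhd_inter hconn hreg hball hS.1,
    S₀, hgirth.isErrLD_iff.2 fun v => (hS₀ v).ge,
    density_eq_of_encard_closedNbhd_inter_eq hconn hreg hball hS₀⟩

theorem errLD_density_hex :
    (∀ S : Set (ℤ × ℤ), IsErrLD hexGrid S →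
      (3 : ℝ) / 4 ≤ density hexGrid S ((0 : ℤ), (0 : ℤ))) ∧
    (∃ S : Set (ℤ × ℤ), IsErrLD hexGrid S ∧
      density hexGrid S ((0 : ℤ), (0 : ℤ)) = (3 : ℝ) / 4) :=
  errLD_density_hex_general hexGrid_connected hexGrid_isRegularOfDegree hexGrid_girthAtLeastFive
    hexGrid_hasFolnerBalls encard_closedNbhd_inter_hexLabel_ne_zero
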